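/- Let Γ ⊆ ℕ contain arbitrarily long intervals of consecutive integers (for every L ∈ ℕ there is m with {m, m+1, ..., m+L} ⊆ Γ). Then the system E(ℤ∖(Γ∪(−Γ))) = {e^{2πint} : n ∈ ℤ, n ∉ Γ, −n ∉ Γ} does not span L²(𝕋, w) for some nonnegative integrable weight w on (0,1) satisfying ∫₀¹ log w(t) dt = −∞. -/

import Mathlib

open MeasureTheory

noncomputable section

/-- The weighted measure `w(t) dt` on `(0,1)`. -/
def wMeasure (w : ℝ → ℝ) : Measure ℝ :=
  (volume.restrict (Set.Ioo (0:ℝ) 1)).withDensity (fun t => ENNReal.ofReal (w t))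

/-- The exponential `e^{2πiλt}`. -/
def expf (l : ℝ) : ℝ → ℂ := fun t => Complex.exp (2 * Real.pi * Complex.I * l * t)

/-- Finite linear combinations of the exponentials `e^{2πiλt}`, `λ ∈ S`, are dense in
`L²([0,1], w(t)dt)`. -/
def ExpSpans (w : ℝ → ℝ) (S : Set ℝ) : Prop :=
  closure ((Submodule.span ℂ
      {g : Lp ℂ 2 (wMeasure w) | ∃ l ∈ S, (g : ℝ → ℂ) =ᵐ[wMeasure w] expf l} :
        Submodule ℂ (Lp ℂ 2 (wMeasure w))) : Set (Lp ℂ 2 (wMeasure w))) = Set.univ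

/-- `∫₀¹ log w(t) dt = -∞`: the positive part is finite and the negative part is infinite. -/
def LogIntNegInf (w : ℝ → ℝ) : Prop :=
  (∫⁻ t in Set.Ioo (0:ℝ) 1, ENNReal.ofReal (Real.log (w t))) ≠ ⊤ ∧
  (∫⁻ t in Set.Ioo (0:ℝ) 1, ENNReal.ofReal (-(Real.log (w t)))) = ⊤

/-!
A real even function `f ≠ 0` whose Fourier coefficients vanish outside `Γ ∪ (-Γ)` is orthogonal to
`E(ℤ∖(Γ∪(-Γ)))` in `L²(𝕋)`, and stays so in `L²(𝕋,w)` for every weight `w` equal to `1` off the zero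
set of `f`. If that zero set has positive measure, `w` can be taken so small on it that
`∫₀¹ log w = -∞`.

Such an `f` is the limit of Riesz-product type iterates `u ↦ u (1 + (1 - u²) cos (2πnt) / 2)`,
started from half a cosine. Each new frequency `n` lies so deep inside a long interval of `Γ` that
the correction has its spectrum in `Γ ∪ (-Γ)` and is orthogonal to everything before it. The
iterates stay bounded by `1`, hence converge in `L²`, and since the squared norm of the increment is
`∫ (u - u³)² / 8`, the limit takes values in `{-1, 0, 1}`.
-/

open Filter
open scoped Topology

/-- Lebesgue measure on `(0,1)`, the reference measure of the unweighted space `L²(𝕋)`. -/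
abbrev unitVolume : Measure ℝ := volume.restrict (Set.Ioo (0 : ℝ) 1)

lemma integrable_unitVolume_of_continuous {E : Type*} [NormedAddCommGroup E] {f : ℝ → E}
    (hf : Continuous f) : Integrable f unitVolume :=
  hf.continuousOn.integrableOn_Icc.mono_set Set.Ioo_subset_Icc_self

section CosinePolynomials

lemma continuous_expf (l : ℝ) : Continuous (expf l) := by
  unfold expf
  fun_prop

lemma integral_expf_intCast {n : ℤ} (hn : n ≠ 0) : ∫ t, expf n t ∂unitVolume = 0 := by
  have hc : (2 * Real.pi * Complex.I * n : ℂ) ≠ 0 := by simp [Real.pi_ne_zero, hn]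
  have hperiod : Complex.exp (2 * Real.pi * Complex.I * n * (1 : ℝ)) = 1 :=
    Complex.exp_eq_one_iff.2 ⟨n, by push_cast; ring⟩
  rw [← integral_Ioc_eq_integral_Ioo, ← intervalIntegral.integral_of_le zero_le_one]
  simp only [expf, Complex.ofReal_intCast]
  rw [integral_exp_mul_complex hc, hperiod]
  simp

/-- The cosine `cos (2πnt)` of integer frequency `n`. -/
def cosWave (n : ℕ) : ℝ → ℝ := fun t => Real.cos (2 * Real.pi * n * t)

lemma continuous_cosWave (n : ℕ) : Continuous (cosWave n) := by
  unfold cosWave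
  fun_prop

lemma abs_cosWave_le_one (n : ℕ) (t : ℝ) : |cosWave n t| ≤ 1 := Real.abs_cos_le_one _

lemma cosWave_zero : cosWave 0 = 1 := by
  ext t
  simp [cosWave]

lemma cosWave_mul_cosWave (m n : ℕ) :
    cosWave m * cosWave n =
      (1 / 2 : ℝ) • (cosWave ((m : ℤ) - n).natAbs + cosWave (m + n)) := by
  ext t
  have hdiff : cosWave ((m : ℤ) - n).natAbs t =
      Real.cos (2 * Real.pi * m * t - 2 * Real.pi * n * t) := by
    rw [cosWave, Nat.cast_natAbs, ← Real.cos_abs, ← Real.cos_abs (_ - _),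
      show 2 * Real.pi * m * t - 2 * Real.pi * n * t = 2 * Real.pi * (m - n) * t by ring]
    push_cast
    simp only [abs_mul, abs_abs]
  have hsum : cosWave (m + n) t = Real.cos (2 * Real.pi * m * t + 2 * Real.pi * n * t) := by
    simp only [cosWave]
    push_cast
    ring_nf
  simp only [Pi.mul_apply, Pi.smul_apply, Pi.add_apply, smul_eq_mul, hdiff, hsum,
    ← Real.two_mul_cos_mul_cos]
  simp only [cosWave]
  ring

lemma cosWave_smul_expf (m : ℕ) (n : ℤ) (t : ℝ) :
    cosWave m t • expf n t =
      (1 / 2 : ℂ) * (expf ((m + n : ℤ) : ℝ) t + expf ((-m + n : ℤ) : ℝ) t) := by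
  have hcos : (cosWave m t : ℂ) = (1 / 2 : ℂ) * (expf m t + expf (-m) t) := by
    simp only [cosWave, expf, Complex.ofReal_cos, Complex.cos]
    push_cast
    ring_nf
  rw [Complex.real_smul, hcos, mul_assoc, add_mul]
  simp only [expf, ← Complex.exp_add]
  push_cast
  ring_nf

lemma integral_cosWave_smul_expf {m : ℕ} {n : ℤ} (h : n.natAbs ≠ m) :
    ∫ t, cosWave m t • expf n t ∂unitVolume = 0 := by
  have hint (k : ℤ) : Integrable (expf k) unitVolume :=
    integrable_unitVolume_of_continuous (continuous_expf k)
  simp_rw [cosWave_smul_expf]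
  rw [integral_const_mul, integral_add (hint _) (hint _), integral_expf_intCast (by omega),
    integral_expf_intCast (by omega), add_zero, mul_zero]

/-- Real even trigonometric polynomials whose frequencies lie in `A`. Every function of the
construction is even, so cosines suffice and the algebra stays real. -/
def cosPoly (A : Set ℕ) : Submodule ℝ (ℝ → ℝ) := Submodule.span ℝ (cosWave '' A)

variable {A B C : Set ℕ} {p q : ℝ → ℝ} {a b m n : ℕ}

lemma cosPoly_mono (h : A ⊆ B) : cosPoly A ≤ cosPoly B :=
  Submodule.span_mono (Set.image_mono h)

lemma cosWave_mem_cosPoly (h : n ∈ A) : cosWave n ∈ cosPoly A :=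
  Submodule.subset_span (Set.mem_image_of_mem _ h)

lemma continuous_of_mem_cosPoly (hp : p ∈ cosPoly A) : Continuous p := by
  induction hp using Submodule.span_induction with
  | mem _ h => obtain ⟨n, -, rfl⟩ := h; exact continuous_cosWave n
  | zero => exact continuous_const
  | add _ _ _ _ hp hq => exact hp.add hq
  | smul c _ _ hp => exact hp.const_smul c

lemma mul_mem_cosPoly (h : ∀ m ∈ A, ∀ n ∈ B, ((m : ℤ) - n).natAbs ∈ C ∧ m + n ∈ C)
    (hp : p ∈ cosPoly A) (hq : q ∈ cosPoly B) : p * q ∈ cosPoly C := by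
  have hmul : cosPoly A * cosPoly B ≤ cosPoly C := by
    rw [cosPoly, cosPoly, Submodule.span_mul_span, Submodule.span_le]
    rintro _ ⟨_, ⟨m, hm, rfl⟩, _, ⟨n, hn, rfl⟩, rfl⟩
    obtain ⟨hsub, hadd⟩ := h m hm n hn
    simp only [cosWave_mul_cosWave]
    exact Submodule.smul_mem _ _
      (add_mem (cosWave_mem_cosPoly hsub) (cosWave_mem_cosPoly hadd))
  exact hmul (Submodule.mul_mem_mul hp hq)

lemma mul_mem_cosPoly_Iic (hp : p ∈ cosPoly (Set.Iic a)) (hq : q ∈ cosPoly (Set.Iic b)) :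
    p * q ∈ cosPoly (Set.Iic (a + b)) := by
  refine mul_mem_cosPoly (fun m hm n hn => ?_) hp hq
  simp only [Set.mem_Iic] at *
  omega

lemma mul_cosWave_mem_cosPoly_Icc (hp : p ∈ cosPoly (Set.Iic a)) :
    p * cosWave n ∈ cosPoly (Set.Icc (n - a) (n + a)) := by
  refine mul_mem_cosPoly (fun m hm k hk => ?_) hp (cosWave_mem_cosPoly (Set.mem_singleton n))
  simp only [Set.mem_Iic, Set.mem_Icc, Set.mem_singleton_iff] at *
  omega

lemma integral_smul_expf_eq_zero (hp : p ∈ cosPoly A) {n : ℤ} (hn : n.natAbs ∉ A) :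
    ∫ t, p t • expf n t ∂unitVolume = 0 := by
  have hint {u : ℝ → ℝ} (hu : u ∈ cosPoly A) :
      Integrable (fun t => u t • expf n t) unitVolume :=
    integrable_unitVolume_of_continuous
      ((continuous_of_mem_cosPoly hu).smul (continuous_expf n))
  induction hp using Submodule.span_induction with
  | mem _ h =>
    obtain ⟨m, hm, rfl⟩ := h
    exact integral_cosWave_smul_expf fun h => hn (h ▸ hm)
  | zero => simp
  | add u v hu hv ihu ihv =>
    simp only [Pi.add_apply, add_smul]
    rw [integral_add (hint hu) (hint hv), ihu, ihv, add_zero]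
  | smul c u _ ihu =>
    simp only [Pi.smul_apply, smul_assoc]
    rw [integral_smul, ihu, smul_zero]

lemma integral_eq_zero_of_mem_cosPoly (hA : 0 ∉ A) (hp : p ∈ cosPoly A) :
    ∫ t, p t ∂unitVolume = 0 := by
  have h := integral_smul_expf_eq_zero hp (n := 0) hA
  simp only [expf, Int.cast_zero, Complex.ofReal_zero, mul_zero, zero_mul, Complex.exp_zero,
    Complex.real_smul, mul_one] at h
  rw [integral_complex_ofReal] at h
  exact_mod_cast h

lemma integral_mul_eq_zero_of_disjoint (hAB : Disjoint A B) (hp : p ∈ cosPoly A)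
    (hq : q ∈ cosPoly B) : ∫ t, p t * q t ∂unitVolume = 0 := by
  refine integral_eq_zero_of_mem_cosPoly (A := {n | n ≠ 0}) (by simp)
    (mul_mem_cosPoly (fun m hm n hn => ?_) hp hq)
  have hne := hAB.ne_of_mem hm hn
  simp only [Set.mem_ofPred_eq]
  omega

lemma integral_sq_mul_cosWave (hp : p ∈ cosPoly (Set.Iic a)) (han : a < n) :
    ∫ t, (p t * cosWave n t) ^ 2 ∂unitVolume = 1 / 2 * ∫ t, p t ^ 2 ∂unitVolume := by
  have hpp : p * p ∈ cosPoly (Set.Iic (a + a)) := mul_mem_cosPoly_Iic hp hp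
  have hosc : ∫ t, (p * p) t * cosWave (n + n) t ∂unitVolume = 0 := by
    refine integral_mul_eq_zero_of_disjoint (B := {n + n}) ?_ hpp (cosWave_mem_cosPoly rfl)
    rw [Set.disjoint_singleton_right, Set.mem_Iic]
    omega
  have hexpand (t : ℝ) : (p t * cosWave n t) ^ 2 =
      1 / 2 * p t ^ 2 + 1 / 2 * ((p * p) t * cosWave (n + n) t) := by
    have h := congrFun (cosWave_mul_cosWave n n) t
    simp only [sub_self, Int.natAbs_zero, cosWave_zero, Pi.mul_apply, Pi.smul_apply, Pi.add_apply,
      Pi.one_apply, smul_eq_mul] at h ⊢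
    linear_combination p t ^ 2 * h
  have hpc := continuous_of_mem_cosPoly hp
  have hcc := continuous_cosWave (n + n)
  simp_rw [hexpand]
  rw [integral_add, integral_const_mul, integral_const_mul, hosc, mul_zero, add_zero] <;>
    exact integrable_unitVolume_of_continuous (by fun_prop)

lemma integral_cosWave_sq (hn : 0 < n) : ∫ t, cosWave n t ^ 2 ∂unitVolume = 1 / 2 := by
  have hone : (1 : ℝ → ℝ) ∈ cosPoly (Set.Iic 0) :=
    cosWave_zero ▸ cosWave_mem_cosPoly Set.self_mem_Iic
  simpa using integral_sq_mul_cosWave hone hn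

end CosinePolynomials

section RieszStep

/-- One step of the Riesz-product type construction. Multiplying `u` by the positive factor
`1 + (1 - u²) cos (2πnt) / 2` pushes its values towards `{-1, 0, 1}`, keeps its sign, and only adds
frequencies close to `n`. -/
def rieszStep (n : ℕ) (u : ℝ → ℝ) : ℝ → ℝ := u + (1 / 2 : ℝ) • ((u - u ^ 3) * cosWave n)

variable {Γ : Set ℕ} {u v q : ℝ → ℝ} {d n : ℕ} {t : ℝ}

lemma rieszStep_apply (n : ℕ) (u : ℝ → ℝ) (t : ℝ) :
    rieszStep n u t = u t + 1 / 2 * ((u t - u t ^ 3) * cosWave n t) := rfl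

lemma rieszStep_apply_eq_mul (n : ℕ) (u : ℝ → ℝ) (t : ℝ) :
    rieszStep n u t = u t * (1 + (1 - u t ^ 2) * cosWave n t / 2) := by
  rw [rieszStep_apply]
  ring

lemma abs_rieszStep_le_one (hu : |u t| ≤ 1) : |rieszStep n u t| ≤ 1 := by
  have hgap : 0 ≤ 1 - |u t| ^ 2 := sub_nonneg.2 (pow_le_one₀ (abs_nonneg _) hu)
  have hfactor : |1 + (1 - u t ^ 2) * cosWave n t / 2| ≤ 1 + (1 - |u t| ^ 2) / 2 := by
    rw [← sq_abs (u t)]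
    refine (abs_add_le _ _).trans ?_
    rw [abs_one, abs_div, abs_mul, abs_of_nonneg hgap, abs_two]
    have := mul_le_of_le_one_right hgap (abs_cosWave_le_one n t)
    gcongr
  calc |rieszStep n u t| = |u t| * |1 + (1 - u t ^ 2) * cosWave n t / 2| := by
        rw [rieszStep_apply_eq_mul, abs_mul]
    _ ≤ |u t| * (1 + (1 - |u t| ^ 2) / 2) := by gcongr
    _ = 1 - (1 - |u t|) ^ 2 * (2 + |u t|) / 2 := by ring
    _ ≤ 1 := sub_le_self _ (by positivity)

lemma rieszStep_mul_nonneg {c : ℝ} (hu : |u t| ≤ 1) (hc : 0 ≤ u t * c) :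
    0 ≤ rieszStep n u t * c := by
  have hgap : |1 - u t ^ 2| ≤ 1 := by
    rw [abs_of_nonneg (sub_nonneg.2 ((sq_le_one_iff_abs_le_one _).2 hu))]
    exact sub_le_self _ (sq_nonneg _)
  have hsmall : |(1 - u t ^ 2) * cosWave n t| ≤ 1 := by
    rw [abs_mul]
    exact mul_le_one₀ hgap (abs_nonneg _) (abs_cosWave_le_one n t)
  rw [rieszStep_apply_eq_mul, mul_right_comm]
  exact mul_nonneg hc (by linarith [neg_le_of_abs_le hsmall])

lemma sub_pow_three_mem_cosPoly (hu : u ∈ cosPoly (Set.Iic d)) :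
    u - u ^ 3 ∈ cosPoly (Set.Iic (3 * d)) := by
  have hcube := mul_mem_cosPoly_Iic (mul_mem_cosPoly_Iic hu hu) hu
  rw [← pow_two, ← pow_succ, show d + d + d = 3 * d by ring] at hcube
  exact sub_mem (cosPoly_mono (Set.Iic_subset_Iic.2 (by omega)) hu) hcube

lemma rieszStep_mem_cosPoly (hu : u ∈ cosPoly (Γ ∩ Set.Iic d))
    (hwindow : Set.Icc (n - 3 * d) (n + 3 * d) ⊆ Γ) :
    rieszStep n u ∈ cosPoly (Γ ∩ Set.Iic (n + 3 * d)) := by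
  have hcorr := mul_cosWave_mem_cosPoly_Icc (n := n)
    (sub_pow_three_mem_cosPoly (cosPoly_mono Set.inter_subset_right hu))
  exact add_mem
    (cosPoly_mono (Set.inter_subset_inter_right _ (Set.Iic_subset_Iic.2 (by omega))) hu)
    (Submodule.smul_mem _ _ (cosPoly_mono (Set.subset_inter hwindow fun _ hk => hk.2) hcorr))

lemma integral_rieszStep_mul (hu : u ∈ cosPoly (Set.Iic d)) (hq : q ∈ cosPoly (Set.Iic d))
    (hdn : 4 * d < n) :
    ∫ t, rieszStep n u t * q t ∂unitVolume = ∫ t, u t * q t ∂unitVolume := by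
  have hcorr : (u - u ^ 3) * cosWave n ∈ cosPoly (Set.Icc (n - 3 * d) (n + 3 * d)) :=
    mul_cosWave_mem_cosPoly_Icc (sub_pow_three_mem_cosPoly hu)
  have horth : ∫ t, ((u - u ^ 3) * cosWave n) t * q t ∂unitVolume = 0 := by
    refine integral_mul_eq_zero_of_disjoint (Set.disjoint_left.2 fun k hk hkd => ?_) hcorr hq
    simp only [Set.mem_Icc, Set.mem_Iic] at hk hkd
    omega
  have hexpand (t : ℝ) : rieszStep n u t * q t =
      u t * q t + 1 / 2 * (((u - u ^ 3) * cosWave n) t * q t) := by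
    simp only [rieszStep, Pi.add_apply, Pi.smul_apply, smul_eq_mul]
    ring
  have huc := continuous_of_mem_cosPoly hu
  have hqc := continuous_of_mem_cosPoly hq
  have hcc := continuous_of_mem_cosPoly hcorr
  simp_rw [hexpand]
  rw [integral_add, integral_const_mul, horth, mul_zero, add_zero] <;>
    exact integrable_unitVolume_of_continuous (by fun_prop)

lemma integral_rieszStep_sub_sq (hu : u ∈ cosPoly (Set.Iic d)) (hdn : 3 * d < n) :
    ∫ t, (rieszStep n u t - u t) ^ 2 ∂unitVolume =
      1 / 8 * ∫ t, (u t - u t ^ 3) ^ 2 ∂unitVolume := by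
  have hexpand (t : ℝ) :
      (rieszStep n u t - u t) ^ 2 = 1 / 4 * ((u - u ^ 3) t * cosWave n t) ^ 2 := by
    simp only [rieszStep_apply, Pi.sub_apply, Pi.pow_apply]
    ring
  simp_rw [hexpand]
  rw [integral_const_mul, integral_sq_mul_cosWave (sub_pow_three_mem_cosPoly hu) hdn]
  simp only [Pi.sub_apply, Pi.pow_apply]
  ring

end RieszStep

section RieszIterates

/-- `Γ` contains arbitrarily long intervals of consecutive integers. -/
def HasLongIntervals (Γ : Set ℕ) : Prop := ∀ L : ℕ, ∃ m : ℕ, ∀ j ≤ L, m + j ∈ Γ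

/-- Frequencies `n k` and degree bounds `d k` for which the iterated Riesz steps stay spectrally
inside `Γ` and each correction is orthogonal to everything of degree at most `d k`. -/
structure IsRieszScheme (Γ : Set ℕ) (d n : ℕ → ℕ) : Prop where
  four_mul_lt : ∀ k, 4 * d k < n k
  window_subset : ∀ k, Set.Icc (n k - 3 * d k) (n k + 3 * d k) ⊆ Γ
  degree_succ : ∀ k, d (k + 1) = n k + 3 * d k

/-- The functions obtained from `u₀` by successive Riesz steps at the frequencies `n k`. -/
def rieszIterate (n : ℕ → ℕ) (u₀ : ℝ → ℝ) : ℕ → ℝ → ℝ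
  | 0 => u₀
  | k + 1 => rieszStep (n k) (rieszIterate n u₀ k)

variable {Γ : Set ℕ} {d n : ℕ → ℕ} {u₀ q : ℝ → ℝ}

lemma HasLongIntervals.exists_pos_mem (hΓ : HasLongIntervals Γ) : ∃ m ∈ Γ, 0 < m := by
  obtain ⟨m, hm⟩ := hΓ 1
  exact ⟨m + 1, hm 1 le_rfl, m.succ_pos⟩

lemma HasLongIntervals.exists_window (hΓ : HasLongIntervals Γ) (d : ℕ) :
    ∃ n, 4 * d < n ∧ Set.Icc (n - 3 * d) (n + 3 * d) ⊆ Γ := by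
  obtain ⟨m, hm⟩ := hΓ (7 * d + 1)
  refine ⟨m + 4 * d + 1, by omega, fun k hk => ?_⟩
  rw [Set.mem_Icc] at hk
  have hmem := hm (k - m) (by omega)
  rwa [Nat.add_sub_cancel' (by omega)] at hmem

lemma HasLongIntervals.exists_isRieszScheme (hΓ : HasLongIntervals Γ) (d₀ : ℕ) :
    ∃ d n : ℕ → ℕ, d 0 = d₀ ∧ IsRieszScheme Γ d n := by
  choose freq hlt hwindow using hΓ.exists_window
  let d : ℕ → ℕ := fun k => Nat.rec d₀ (fun _ e => freq e + 3 * e) k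
  exact ⟨d, fun k => freq (d k), rfl, fun k => hlt (d k), fun k => hwindow (d k), fun _ => rfl⟩

lemma IsRieszScheme.monotone_degree (h : IsRieszScheme Γ d n) : Monotone d :=
  monotone_nat_of_le_succ fun k => by rw [h.degree_succ]; omega

lemma IsRieszScheme.rieszIterate_mem (h : IsRieszScheme Γ d n)
    (hu₀ : u₀ ∈ cosPoly (Γ ∩ Set.Iic (d 0))) (k : ℕ) :
    rieszIterate n u₀ k ∈ cosPoly (Γ ∩ Set.Iic (d k)) := by
  induction k with
  | zero => exact hu₀
  | succ k ih =>
    rw [h.degree_succ]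
    exact rieszStep_mem_cosPoly ih (h.window_subset k)

lemma abs_rieszIterate_le_one (hu₀ : ∀ t, |u₀ t| ≤ 1) (k : ℕ) (t : ℝ) :
    |rieszIterate n u₀ k t| ≤ 1 := by
  induction k with
  | zero => exact hu₀ t
  | succ k ih => exact abs_rieszStep_le_one ih

lemma rieszIterate_mul_nonneg (hu₀ : ∀ t, |u₀ t| ≤ 1) (k : ℕ) (t : ℝ) :
    0 ≤ rieszIterate n u₀ k t * u₀ t := by
  induction k with
  | zero => exact mul_self_nonneg _
  | succ k ih => exact rieszStep_mul_nonneg (abs_rieszIterate_le_one hu₀ k t) ih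

lemma IsRieszScheme.integral_rieszIterate_mul (h : IsRieszScheme Γ d n)
    (hu₀ : u₀ ∈ cosPoly (Γ ∩ Set.Iic (d 0))) {j k : ℕ} (hjk : j ≤ k)
    (hq : q ∈ cosPoly (Set.Iic (d j))) :
    ∫ t, rieszIterate n u₀ k t * q t ∂unitVolume =
      ∫ t, rieszIterate n u₀ j t * q t ∂unitVolume := by
  induction k, hjk using Nat.le_induction with
  | base => rfl
  | succ k hjk ih =>
    rw [← ih]
    exact integral_rieszStep_mul (cosPoly_mono Set.inter_subset_right (h.rieszIterate_mem hu₀ k))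
      (cosPoly_mono (Set.Iic_subset_Iic.2 (h.monotone_degree hjk)) hq) (h.four_mul_lt k)

end RieszIterates

section Limits

lemma cauchySeq_of_inner_eq_norm_sq {E : Type*} [NormedAddCommGroup E] [InnerProductSpace ℝ E]
    {F : ℕ → E} {C : ℝ} (horth : ∀ j k, j ≤ k → inner ℝ (F k) (F j) = ‖F j‖ ^ 2)
    (hbdd : ∀ k, ‖F k‖ ^ 2 ≤ C) : CauchySeq F := by
  have hpyth (j k : ℕ) (hjk : j ≤ k) : ‖F k - F j‖ ^ 2 = ‖F k‖ ^ 2 - ‖F j‖ ^ 2 := by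
    rw [norm_sub_sq_real, horth j k hjk]
    ring
  have hmono : Monotone fun k => ‖F k‖ ^ 2 := fun j k hjk =>
    sub_nonneg.1 (hpyth j k hjk ▸ sq_nonneg _)
  have hcauchy : CauchySeq fun k => ‖F k‖ ^ 2 :=
    (tendsto_atTop_ciSup hmono ⟨C, Set.forall_mem_range.2 hbdd⟩).cauchySeq
  rw [Metric.cauchySeq_iff'] at hcauchy ⊢
  intro ε hε
  obtain ⟨N, hN⟩ := hcauchy (ε ^ 2) (by positivity)
  refine ⟨N, fun k hk => lt_of_pow_lt_pow_left₀ 2 hε.le ?_⟩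
  rw [dist_eq_norm, hpyth N k hk]
  exact (le_abs_self _).trans_lt (hN k hk)

variable {α : Type*} [MeasurableSpace α] {μ : Measure α} {u : ℕ → α → ℝ} {f : α → ℝ} {C : ℝ}

lemma inner_toLp_eq_integral {f g : α → ℝ} (hf : MemLp f 2 μ) (hg : MemLp g 2 μ) :
    inner ℝ (hf.toLp f) (hg.toLp g) = ∫ t, f t * g t ∂μ := by
  rw [L2.inner_def]
  refine integral_congr_ae ?_
  filter_upwards [hf.coeFn_toLp, hg.coeFn_toLp] with t hft hgt
  rw [hft, hgt, RCLike.inner_apply, conj_trivial, mul_comm]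

lemma norm_toLp_sq_eq_integral {f : α → ℝ} (hf : MemLp f 2 μ) :
    ‖hf.toLp f‖ ^ 2 = ∫ t, f t ^ 2 ∂μ := by
  rw [← real_inner_self_eq_norm_sq, inner_toLp_eq_integral]
  simp only [pow_two]

lemma exists_ae_tendsto_subseq_of_integral_mul_eq (hu : ∀ k, MemLp (u k) 2 μ)
    (hbdd : ∀ k, ∫ t, u k t ^ 2 ∂μ ≤ C)
    (horth : ∀ j k, j ≤ k → ∫ t, u k t * u j t ∂μ = ∫ t, u j t ^ 2 ∂μ) :
    Tendsto (fun k => ∫ t, (u (k + 1) t - u k t) ^ 2 ∂μ) atTop (𝓝 0) ∧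
      ∃ f : α → ℝ, Measurable f ∧ ∃ ns : ℕ → ℕ, StrictMono ns ∧
        ∀ᵐ t ∂μ, Tendsto (fun i => u (ns i) t) atTop (𝓝 (f t)) := by
  let F : ℕ → Lp ℝ 2 μ := fun k => (hu k).toLp (u k)
  have hcauchy : CauchySeq F := by
    refine cauchySeq_of_inner_eq_norm_sq (C := C) (fun j k hjk => ?_) fun k => ?_
    · rw [inner_toLp_eq_integral, horth j k hjk, norm_toLp_sq_eq_integral]
    · exact (norm_toLp_sq_eq_integral (hu k)).trans_le (hbdd k)
  obtain ⟨G, hG⟩ := cauchySeq_tendsto_of_complete hcauchy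
  constructor
  · have hincr (k : ℕ) : ‖F (k + 1) - F k‖ ^ 2 = ∫ t, (u (k + 1) t - u k t) ^ 2 ∂μ := by
      simp only [F, ← MemLp.toLp_sub]
      exact norm_toLp_sq_eq_integral _
    simpa [hincr] using (((hG.comp (tendsto_add_atTop_nat 1)).sub hG).norm).pow 2
  · obtain ⟨ns, hns, hae⟩ := (tendstoInMeasure_of_tendsto_Lp hG).exists_seq_tendsto_ae
    refine ⟨G, (Lp.stronglyMeasurable G).measurable, ns, hns, ?_⟩
    filter_upwards [hae, ae_all_iff.2 fun k => (hu k).coeFn_toLp] with t ht hF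
    simpa only [F, hF] using ht

lemma integral_smul_eq_of_ae_tendsto {E : Type*} [NormedAddCommGroup E] [NormedSpace ℝ E]
    {g : α → E} {c : E} (hu : ∀ k, AEStronglyMeasurable (u k) μ)
    (hbdd : ∀ k t, |u k t| ≤ C) (hg : Integrable g μ)
    (hlim : ∀ᵐ t ∂μ, Tendsto (fun k => u k t) atTop (𝓝 (f t)))
    (hc : ∀ k, ∫ t, u k t • g t ∂μ = c) : ∫ t, f t • g t ∂μ = c := by
  have htendsto : Tendsto (fun k => ∫ t, u k t • g t ∂μ) atTop (𝓝 (∫ t, f t • g t ∂μ)) := by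
    refine tendsto_integral_of_dominated_convergence (fun t => C * ‖g t‖)
      (fun k => (hu k).smul hg.aestronglyMeasurable) (hg.norm.const_mul C)
      (fun k => ae_of_all _ fun t => ?_) ?_
    · rw [norm_smul, Real.norm_eq_abs]
      gcongr
      exact hbdd k t
    · filter_upwards [hlim] with t ht using ht.smul_const (g t)
  simp_rw [hc] at htendsto
  exact tendsto_nhds_unique htendsto tendsto_const_nhds

lemma ae_eq_zero_of_tendsto_integral_sq [IsFiniteMeasure μ]
    (hu : ∀ k, AEStronglyMeasurable (u k) μ) (hbdd : ∀ k t, |u k t| ≤ C)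
    (hlim : ∀ᵐ t ∂μ, Tendsto (fun k => u k t) atTop (𝓝 (f t)))
    (hsq : Tendsto (fun k => ∫ t, u k t ^ 2 ∂μ) atTop (𝓝 0)) : f =ᵐ[μ] 0 := by
  have hsq_le (k : ℕ) (t : α) : ‖u k t ^ 2‖ ≤ C ^ 2 := by
    rw [norm_pow, Real.norm_eq_abs]
    gcongr
    exact hbdd k t
  have hlim_sq : ∀ᵐ t ∂μ, Tendsto (fun k => u k t ^ 2) atTop (𝓝 (f t ^ 2)) := by
    filter_upwards [hlim] with t ht using ht.pow 2
  have hint : Integrable (fun t => f t ^ 2) μ := by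
    refine Integrable.of_bound
      (aestronglyMeasurable_of_tendsto_ae atTop (fun k => (hu k).pow 2) hlim_sq) (C ^ 2) ?_
    filter_upwards [hlim_sq] with t ht using le_of_tendsto' ht.norm fun k => hsq_le k t
  have hzero : ∫ t, f t ^ 2 ∂μ = 0 :=
    tendsto_nhds_unique
      (tendsto_integral_filter_of_norm_le_const (.of_forall fun k => (hu k).pow 2)
        ⟨C ^ 2, .of_forall fun k => ae_of_all _ (hsq_le k)⟩ hlim_sq) hsq
  filter_upwards [(integral_eq_zero_iff_of_nonneg (fun t => sq_nonneg (f t)) hint).1 hzero]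
    with t ht using pow_eq_zero_iff two_ne_zero |>.1 ht

end Limits

section TernaryLimit

variable {Γ : Set ℕ} {u₀ f : ℝ → ℝ}

lemma abs_sub_pow_three_le_one {x : ℝ} (hx : |x| ≤ 1) : |x - x ^ 3| ≤ 1 := by
  have hsq : x ^ 2 ≤ 1 := (sq_le_one_iff_abs_le_one x).2 hx
  rw [show x - x ^ 3 = x * (1 - x ^ 2) by ring, abs_mul]
  exact mul_le_one₀ hx (abs_nonneg _) (abs_le.2 ⟨by linarith, by linarith [sq_nonneg x]⟩)

/-- The increments of the iterates are orthogonal, so the iterates converge in `L²`; the increment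
out of `u` has squared norm `∫ (u - u³)² / 8`, so these defects tend to `0`. -/
lemma IsRieszScheme.exists_ae_tendsto_subseq {d n : ℕ → ℕ} (h : IsRieszScheme Γ d n)
    (hu₀ : u₀ ∈ cosPoly (Γ ∩ Set.Iic (d 0))) (hu₀_le : ∀ t, |u₀ t| ≤ 1) :
    Tendsto (fun k => ∫ t, (rieszIterate n u₀ k t - rieszIterate n u₀ k t ^ 3) ^ 2 ∂unitVolume)
        atTop (𝓝 0) ∧
      ∃ f : ℝ → ℝ, Measurable f ∧ ∃ ns : ℕ → ℕ, StrictMono ns ∧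
        ∀ᵐ t ∂unitVolume, Tendsto (fun i => rieszIterate n u₀ (ns i) t) atTop (𝓝 (f t)) := by
  have hle := abs_rieszIterate_le_one (n := n) hu₀_le
  have hmem (k : ℕ) : rieszIterate n u₀ k ∈ cosPoly (Set.Iic (d k)) :=
    cosPoly_mono Set.inter_subset_right (h.rieszIterate_mem hu₀ k)
  have hcont (k : ℕ) : Continuous (rieszIterate n u₀ k) := continuous_of_mem_cosPoly (hmem k)
  have hsq_le (k : ℕ) : ∫ t, rieszIterate n u₀ k t ^ 2 ∂unitVolume ≤ 1 := by
    calc ∫ t, rieszIterate n u₀ k t ^ 2 ∂unitVolume ≤ ∫ _, (1 : ℝ) ∂unitVolume :=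
          integral_mono (integrable_unitVolume_of_continuous ((hcont k).pow 2))
            (integrable_const 1) fun t => (sq_le_one_iff_abs_le_one _).2 (hle k t)
      _ = 1 := by simp
  have horth (j k : ℕ) (hjk : j ≤ k) :
      ∫ t, rieszIterate n u₀ k t * rieszIterate n u₀ j t ∂unitVolume =
        ∫ t, rieszIterate n u₀ j t ^ 2 ∂unitVolume := by
    rw [h.integral_rieszIterate_mul hu₀ hjk (hmem j)]
    simp only [pow_two]
  obtain ⟨hincr, hlim⟩ := exists_ae_tendsto_subseq_of_integral_mul_eq
    (fun k => MemLp.of_bound (hcont k).aestronglyMeasurable 1 (ae_of_all _ (hle k))) hsq_le horth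
  have hdefect (k : ℕ) :=
    integral_rieszStep_sub_sq (hmem k) (show 3 * d k < n k by linarith [h.four_mul_lt k])
  simp only [rieszIterate, hdefect] at hincr
  exact ⟨by simpa using hincr.const_mul 8, hlim⟩

lemma HasLongIntervals.exists_ternary (hΓ : HasLongIntervals Γ) {d : ℕ}
    (hu₀ : u₀ ∈ cosPoly (Γ ∩ Set.Iic d)) (hu₀_le : ∀ t, |u₀ t| ≤ 1) :
    ∃ f : ℝ → ℝ, Measurable f ∧ (∀ᵐ t ∂unitVolume, f t ^ 3 = f t) ∧
      (∀ᵐ t ∂unitVolume, 0 ≤ f t * u₀ t) ∧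
      ∫ t, f t * u₀ t ∂unitVolume = ∫ t, u₀ t ^ 2 ∂unitVolume ∧
      ∀ n : ℤ, n.natAbs ∉ Γ → ∫ t, f t • expf n t ∂unitVolume = 0 := by
  obtain ⟨d, n, rfl, h⟩ := hΓ.exists_isRieszScheme d
  obtain ⟨hdefect, f, hf, ns, hns, hlim⟩ := h.exists_ae_tendsto_subseq hu₀ hu₀_le
  have hmem := h.rieszIterate_mem hu₀
  have hle (i : ℕ) := abs_rieszIterate_le_one (n := n) hu₀_le (ns i)
  have hmeas (i : ℕ) : AEStronglyMeasurable (rieszIterate n u₀ (ns i)) unitVolume :=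
    (continuous_of_mem_cosPoly (hmem (ns i))).aestronglyMeasurable
  refine ⟨f, hf, ?_, ?_, ?_, fun m hm => ?_⟩
  · have hzero := ae_eq_zero_of_tendsto_integral_sq (fun i => (hmeas i).sub ((hmeas i).pow 3))
      (fun i t => abs_sub_pow_three_le_one (hle i t))
      (hlim.mono fun t ht => ht.sub (ht.pow 3)) (hdefect.comp hns.tendsto_atTop)
    filter_upwards [hzero] with t ht using (sub_eq_zero.1 ht).symm
  · filter_upwards [hlim] with t ht using
      ge_of_tendsto' (ht.mul_const _) fun i => rieszIterate_mul_nonneg hu₀_le (ns i) t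
  · refine integral_smul_eq_of_ae_tendsto hmeas hle
      (integrable_unitVolume_of_continuous (continuous_of_mem_cosPoly hu₀)) hlim fun i => ?_
    simp only [smul_eq_mul, pow_two]
    exact h.integral_rieszIterate_mul hu₀ (Nat.zero_le (ns i))
      (cosPoly_mono Set.inter_subset_right hu₀)
  · exact integral_smul_eq_of_ae_tendsto hmeas hle
      (integrable_unitVolume_of_continuous (continuous_expf m)) hlim
      fun i => integral_smul_expf_eq_zero (hmem (ns i)) fun hmΓ => hm hmΓ.1

/-- If `f` had no zeros, then `f * u₀ = |u₀| ≥ 2 * u₀ ^ 2`, which is too large on average. -/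
lemma measure_zeros_ne_zero_of_ternary (hu₀ : Continuous u₀) (hu₀_le : ∀ t, |u₀ t| ≤ 1 / 2)
    (hu₀_pos : 0 < ∫ t, u₀ t ^ 2 ∂unitVolume) (hcube : ∀ᵐ t ∂unitVolume, f t ^ 3 = f t)
    (hsign : ∀ᵐ t ∂unitVolume, 0 ≤ f t * u₀ t)
    (hint : ∫ t, f t * u₀ t ∂unitVolume = ∫ t, u₀ t ^ 2 ∂unitVolume) :
    unitVolume {t | f t = 0} ≠ 0 := by
  intro hzero
  have hne : ∀ᵐ t ∂unitVolume, f t ≠ 0 := measure_eq_zero_iff_ae_notMem.1 hzero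
  have hge : ∀ᵐ t ∂unitVolume, 2 * u₀ t ^ 2 ≤ f t * u₀ t := by
    filter_upwards [hne, hcube, hsign] with t hne hcube hsign
    have hsq : f t ^ 2 = 1 := mul_right_cancel₀ hne (by linear_combination hcube)
    have habs : |f t| = 1 := by rw [← Real.sqrt_sq_eq_abs, hsq, Real.sqrt_one]
    calc 2 * u₀ t ^ 2 = 2 * |u₀ t| * |u₀ t| := by rw [← sq_abs]; ring
      _ ≤ 1 * |u₀ t| := by
        gcongr
        linarith [hu₀_le t]
      _ = f t * u₀ t := by rw [← abs_of_nonneg hsign, abs_mul, habs]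
  have hfu : Integrable (fun t => f t * u₀ t) unitVolume :=
    Integrable.of_integral_ne_zero (hint ▸ hu₀_pos.ne')
  have hmono := integral_mono_ae
    ((integrable_unitVolume_of_continuous (hu₀.pow 2)).const_mul 2) hfu hge
  simp only [Pi.pow_apply] at hmono
  rw [integral_const_mul, hint] at hmono
  linarith

lemma HasLongIntervals.exists_ternary_orthogonal (hΓ : HasLongIntervals Γ) :
    ∃ f : ℝ → ℝ, Measurable f ∧ (∀ᵐ t ∂unitVolume, f t ^ 3 = f t) ∧ ¬ f =ᵐ[unitVolume] 0 ∧
      unitVolume {t | f t = 0} ≠ 0 ∧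
      ∀ n : ℤ, n.natAbs ∉ Γ → ∫ t, f t • expf n t ∂unitVolume = 0 := by
  obtain ⟨m, hmΓ, hm⟩ := hΓ.exists_pos_mem
  let u₀ : ℝ → ℝ := (1 / 2 : ℝ) • cosWave m
  have hu₀_le (t : ℝ) : |u₀ t| ≤ 1 / 2 := by
    simp only [u₀, Pi.smul_apply, smul_eq_mul, abs_mul, abs_of_pos (one_half_pos (α := ℝ))]
    linarith [abs_cosWave_le_one m t]
  have hu₀_sq : ∫ t, u₀ t ^ 2 ∂unitVolume = 1 / 8 := by
    simp only [u₀, Pi.smul_apply, smul_eq_mul, mul_pow]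
    rw [integral_const_mul, integral_cosWave_sq hm]
    norm_num
  obtain ⟨f, hf, hcube, hsign, hint, horth⟩ := hΓ.exists_ternary (d := m) (u₀ := u₀)
    (Submodule.smul_mem _ _ (cosWave_mem_cosPoly ⟨hmΓ, Set.self_mem_Iic⟩))
    fun t => (hu₀_le t).trans one_half_lt_one.le
  refine ⟨f, hf, hcube, fun hzero => ?_, ?_, horth⟩
  · have h := integral_eq_zero_of_ae (hzero.mono fun t ht => show f t * u₀ t = 0 by simp [ht])
    rw [hint, hu₀_sq] at h
    norm_num at h
  · exact measure_zeros_ne_zero_of_ternary ((continuous_cosWave m).const_smul _) hu₀_le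
      (by rw [hu₀_sq]; norm_num) hcube hsign hint

end TernaryLimit

section Weights

lemma tendsto_measure_closedBall_nhds_zero {α : Type*} [MetricSpace α] [MeasurableSpace α]
    [OpensMeasurableSpace α] (μ : Measure α) [IsLocallyFiniteMeasure μ] [NullSingletonClass μ]
    (x : α) :
    Tendsto (fun r => μ (Metric.closedBall x r)) (𝓝[>] 0) (𝓝 0) := by
  obtain ⟨R, hR, hfin⟩ :=
    ((μ.finiteAt_nhds x).exists_mem_basis Metric.nhds_basis_closedBall)
  have hthick := tendsto_measure_cthickening_of_isClosed (μ := μ) (s := {x})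
    ⟨R, hR, by rw [Metric.cthickening_singleton x hR.le]; exact hfin.ne⟩ isClosed_singleton
  rw [measure_singleton] at hthick
  refine (hthick.mono_left nhdsWithin_le_nhds).congr' ?_
  filter_upwards [self_mem_nhdsWithin] with r hr
  rw [Metric.cthickening_singleton x (Set.mem_Ioi.1 hr).le]

/-- At a density point `x` of `Z`, the integral over `Z ∩ closedBall x r` is at least the density
`μ (Z ∩ closedBall x r) / μ (closedBall x r)`, which tends to `1`; were the full integral finite,
it would tend to `0`. -/
lemma exists_setLIntegral_inv_measure_closedBall_eq_top {α : Type*} [MetricSpace α]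
    [SecondCountableTopology α] [HasBesicovitchCovering α] [MeasurableSpace α]
    [BorelSpace α] (μ : Measure α) [IsLocallyFiniteMeasure μ] [NullSingletonClass μ]
    {Z : Set α} (hZ : μ Z ≠ 0) : ∃ x, ∫⁻ t in Z, (μ (Metric.closedBall x (dist t x)))⁻¹ ∂μ = ⊤ := by
  have : (ae (μ.restrict Z)).NeBot := by rwa [ae_neBot, ne_eq, Measure.restrict_eq_zero]
  obtain ⟨x, hdensity⟩ := (Besicovitch.ae_tendsto_measure_inter_div μ Z).exists
  refine ⟨x, by_contra fun hfin => ?_⟩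
  have hlimit : Tendsto (fun r => ∫⁻ t in Metric.closedBall x r,
      (μ (Metric.closedBall x (dist t x)))⁻¹ ∂μ.restrict Z) (𝓝[>] 0) (𝓝 0) :=
    tendsto_setLIntegral_zero hfin
      (tendsto_of_tendsto_of_tendsto_of_le_of_le tendsto_const_nhds
        (tendsto_measure_closedBall_nhds_zero μ x) (fun _ => zero_le)
        fun r => Measure.restrict_apply_le _ _)
  refine zero_lt_one.not_ge (le_of_tendsto_of_tendsto' hdensity hlimit fun r => ?_)
  calc μ (Z ∩ Metric.closedBall x r) / μ (Metric.closedBall x r)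
      = ∫⁻ _ in Metric.closedBall x r, (μ (Metric.closedBall x r))⁻¹ ∂μ.restrict Z := by
        rw [setLIntegral_const, Measure.restrict_apply measurableSet_closedBall, Set.inter_comm,
          ENNReal.div_eq_inv_mul]
    _ ≤ _ := setLIntegral_mono' measurableSet_closedBall fun t ht => by
        gcongr
        exact ht

lemma exists_setLIntegral_inv_abs_sub_eq_top {Z : Set ℝ} (hZ : volume Z ≠ 0) :
    ∃ x : ℝ, ∫⁻ t in Z, ENNReal.ofReal (2 * |t - x|)⁻¹ = ⊤ := by
  obtain ⟨x, hx⟩ := exists_setLIntegral_inv_measure_closedBall_eq_top volume hZ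
  refine ⟨x, hx ▸ lintegral_congr_ae ?_⟩
  filter_upwards [ae_restrict_of_ae (Measure.ae_ne volume x)] with t ht
  have hpos : 0 < 2 * |t - x| := by have := abs_pos.2 (sub_ne_zero.2 ht); positivity
  rw [Real.volume_closedBall, Real.dist_eq, ENNReal.ofReal_inv_of_pos hpos]

lemma exists_weight_logIntNegInf {Z : Set ℝ} (hZ : MeasurableSet Z) (hZ_pos : unitVolume Z ≠ 0) :
    ∃ w : ℝ → ℝ, Measurable w ∧ (∀ t, 0 < w t) ∧ (∀ t, w t ≤ 1) ∧ (∀ t ∉ Z, w t = 1) ∧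
      LogIntNegInf w := by
  rw [Measure.restrict_apply hZ] at hZ_pos
  obtain ⟨x, hx⟩ := exists_setLIntegral_inv_abs_sub_eq_top hZ_pos
  let φ : ℝ → ℝ := Z.indicator fun t => (2 * |t - x|)⁻¹
  have hφ (t : ℝ) : 0 ≤ φ t := Set.indicator_nonneg (fun t _ => by positivity) t
  refine ⟨fun t => Real.exp (-φ t), ?_, fun t => Real.exp_pos _,
    fun t => Real.exp_le_one_iff.2 (neg_nonpos.2 (hφ t)), fun t ht => ?_, ?_, ?_⟩
  · have : Measurable φ := Measurable.indicator (by fun_prop) hZ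
    fun_prop
  · simp [φ, ht]
  · simp [ENNReal.ofReal_of_nonpos (neg_nonpos.2 (hφ _))]
  · simp only [Real.log_exp, neg_neg]
    rw [eq_top_iff, ← hx]
    calc ∫⁻ t in Z ∩ Set.Ioo 0 1, ENNReal.ofReal (2 * |t - x|)⁻¹
        = ∫⁻ t in Z ∩ Set.Ioo 0 1, ENNReal.ofReal (φ t) :=
          setLIntegral_congr_fun (hZ.inter measurableSet_Ioo) fun t ht => by
            simp only [φ, Set.indicator_of_mem ht.1]
      _ ≤ ∫⁻ t in Set.Ioo 0 1, ENNReal.ofReal (φ t) := lintegral_mono_set Set.inter_subset_right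

variable {w : ℝ → ℝ}

lemma not_expSpans_of_orthogonal {S : Set ℝ} {g : ℝ → ℂ} (hg : MemLp g 2 (wMeasure w))
    (hg_ne : ¬ g =ᵐ[wMeasure w] 0)
    (horth : ∀ l ∈ S, ∫ t, expf l t * star (g t) ∂wMeasure w = 0) : ¬ ExpSpans w S := by
  intro hspan
  have hle : Submodule.span ℂ {h : Lp ℂ 2 (wMeasure w) |
      ∃ l ∈ S, (h : ℝ → ℂ) =ᵐ[wMeasure w] expf l} ≤ (ℂ ∙ hg.toLp g)ᗮ := by
    refine Submodule.span_le.2 ?_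
    rintro h ⟨l, hl, hh⟩
    rw [SetLike.mem_coe, Submodule.mem_orthogonal_singleton_iff_inner_right, L2.inner_def,
      ← horth l hl]
    refine integral_congr_ae ?_
    filter_upwards [hg.coeFn_toLp, hh] with t hgt hht
    rw [hgt, hht, RCLike.inner_apply]
    rfl
  have hmem : hg.toLp g ∈ (ℂ ∙ hg.toLp g)ᗮ :=
    closure_minimal hle (Submodule.isClosed_orthogonal _) (hspan ▸ Set.mem_univ _)
  rw [Submodule.mem_orthogonal_singleton_iff_inner_right, inner_self_eq_zero] at hmem
  exact hg_ne (hg.coeFn_toLp.symm.trans ((Lp.eq_zero_iff_ae_eq_zero).1 hmem))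

lemma integral_wMeasure_eq_of_eq_one {E : Type*} [NormedAddCommGroup E] [NormedSpace ℝ E]
    (hw : Measurable w) {h : ℝ → E} (hone : ∀ t, h t ≠ 0 → w t = 1) :
    ∫ t, h t ∂wMeasure w = ∫ t, h t ∂unitVolume := by
  rw [wMeasure, integral_withDensity_eq_integral_toReal_smul hw.ennreal_ofReal
    (ae_of_all _ fun _ => ENNReal.ofReal_lt_top)]
  congr 1 with t
  by_cases ht : h t = 0
  · rw [ht, smul_zero]
  · rw [hone t ht, ENNReal.ofReal_one, ENNReal.toReal_one, one_smul]

lemma unitVolume_absolutelyContinuous_wMeasure (hw : Measurable w) (hw_pos : ∀ t, 0 < w t) :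
    unitVolume ≪ wMeasure w :=
  withDensity_absolutelyContinuous' hw.ennreal_ofReal.aemeasurable
    (ae_of_all _ fun t => (ENNReal.ofReal_pos.2 (hw_pos t)).ne')

lemma memLp_ofReal_wMeasure_of_pow_three_eq {f : ℝ → ℝ} (hw : IntegrableOn w (Set.Ioo 0 1))
    (hf : Measurable f) (hcube : ∀ᵐ t ∂unitVolume, f t ^ 3 = f t) :
    MemLp (fun t => (f t : ℂ)) 2 (wMeasure w) := by
  have : IsFiniteMeasure (wMeasure w) := isFiniteMeasure_withDensity_ofReal hw.2
  refine MemLp.of_bound (Complex.measurable_ofReal.comp hf).aestronglyMeasurable 1 ?_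
  filter_upwards [(withDensity_absolutelyContinuous _ _).ae_le hcube] with t ht
  rw [Complex.norm_real, Real.norm_eq_abs, ← sq_le_one_iff_abs_le_one]
  nlinarith [sq_nonneg (f t ^ 2 - 1)]

end Weights

/-- **Proposition 2.** If `Γ ⊆ ℕ` contains arbitrarily long intervals of consecutive integers,
then `E(ℤ∖(Γ∪(-Γ)))` does not span `L²(𝕋,w)` for some nonnegative integrable weight `w` on
`(0,1)` with `∫₀¹ log w = -∞`. -/
theorem long_intervals_not_complete (Γ : Set ℕ) (hΓ0 : 0 ∉ Γ)
    (hlong : ∀ L : ℕ, ∃ m : ℕ, 1 ≤ m ∧ ∀ j : ℕ, j ≤ L → m + j ∈ Γ) :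
    ∃ w : ℝ → ℝ, (∀ t ∈ Set.Ioo (0:ℝ) 1, 0 ≤ w t) ∧
      IntegrableOn w (Set.Ioo (0:ℝ) 1) ∧ LogIntNegInf w ∧
      ¬ ExpSpans w {x : ℝ | ∃ n : ℤ, n.natAbs ∉ Γ ∧ x = n} := by
  have hΓ : HasLongIntervals Γ := fun L => (hlong L).imp fun _ hm => hm.2
  obtain ⟨f, hf, hcube, hf_ne, hzeros, horth⟩ := hΓ.exists_ternary_orthogonal
  obtain ⟨w, hw, hw_pos, hw_le, hw_one, hw_log⟩ :=
    exists_weight_logIntNegInf (hf (measurableSet_singleton 0)) hzeros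
  have hw_int : IntegrableOn w (Set.Ioo 0 1) :=
    Integrable.of_bound hw.aestronglyMeasurable 1 (ae_of_all _ fun t => by
      rw [Real.norm_of_nonneg (hw_pos t).le]
      exact hw_le t)
  refine ⟨w, fun t _ => (hw_pos t).le, hw_int, hw_log, not_expSpans_of_orthogonal
    (memLp_ofReal_wMeasure_of_pow_three_eq hw_int hf hcube) (fun hzero => hf_ne ?_) ?_⟩
  · filter_upwards [(unitVolume_absolutelyContinuous_wMeasure hw hw_pos).ae_le hzero] with t ht
    exact Complex.ofReal_eq_zero.1 ht
  · rintro _ ⟨n, hn, rfl⟩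
    calc ∫ t, expf n t * star (f t : ℂ) ∂wMeasure w
        = ∫ t, f t • expf n t ∂wMeasure w := by
          simp only [Complex.star_def, Complex.conj_ofReal, Complex.real_smul, mul_comm]
      _ = ∫ t, f t • expf n t ∂unitVolume :=
          integral_wMeasure_eq_of_eq_one hw fun t ht => hw_one t fun hz => ht (by
            rw [Set.mem_singleton_iff.1 hz, zero_smul])
      _ = 0 := horth n hn
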